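/- Let K = ℚ(√d₁, √d₂) be a biquadratic field with d₁, d₂ positive odd squarefree integers. If the ideal class group Cl_K is cyclic, then ω(|Δ_K|) ≤ 4, where Δ_K is the discriminant of K and ω(m) denotes the number of distinct prime divisors of m. -/

import Mathlib

open IntermediateField NumberField
noncomputable section
def biquad (d₁ d₂ : ℤ) : IntermediateField ℚ ℂ :=
  IntermediateField.adjoin ℚ {x : ℂ | x ^ 2 = (d₁ : ℂ) ∨ x ^ 2 = (d₂ : ℂ)}
section prelim
variable {K : Type*} [Field K] [NumberField K]

lemma minpoly_sqrt (d : ℤ) (s : K) (hs : s ^ 2 = (d : K)) (hd : ¬ IsSquare d) :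
    minpoly ℚ s = Polynomial.X ^ 2 - Polynomial.C (d : ℚ) := by
  symm
  apply minpoly.eq_of_irreducible_of_monic
  · rw [X_pow_sub_C_irreducible_iff_of_prime Nat.prime_two]
    intro b hb
    apply hd
    rw [← Rat.isSquare_intCast_iff, ← hb]
    exact ⟨b, by ring⟩
  · simp [hs]
  · exact Polynomial.monic_X_pow_sub_C _ (by norm_num)

lemma trace_sqrt (d : ℤ) (s : K) (hs : s ^ 2 = (d : K)) (hd : ¬ IsSquare d) :
    Algebra.trace ℚ K s = 0 := by
  rw [trace_eq_finrank_mul_minpoly_nextCoeff, minpoly_sqrt d s hs hd]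
  have hn : (Polynomial.X ^ 2 - Polynomial.C (d : ℚ)).natDegree = 2 :=
    Polynomial.natDegree_X_pow_sub_C
  rw [Polynomial.nextCoeff_of_natDegree_pos (by omega), hn]
  simp [-map_intCast]

lemma norm_form (d : ℤ) (s : K) (hs : s ^ 2 = (d : K)) (hd : ¬ IsSquare d) (x : K) :
    ∃ u v : ℚ, Algebra.norm ℚ x = u ^ 2 - d * v ^ 2 := by
  have hint : IsIntegral ℚ s := IsIntegral.of_finite ℚ s
  let B := IntermediateField.adjoin.powerBasis hint
  have hdim : B.dim = 2 := by
    have hn : (Polynomial.X ^ 2 - Polynomial.C (d : ℚ)).natDegree = 2 :=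
      Polynomial.natDegree_X_pow_sub_C
    simpa only [B, adjoin.powerBasis_dim, minpoly_sqrt d s hs hd] using hn
  let b : Module.Basis (Fin 2) ℚ ℚ⟮s⟯ := B.basis.reindex (finCongr hdim)
  have hb0 : b 0 = 1 := by simp [b]
  have hb1 : b 1 = AdjoinSimple.gen ℚ s := by simp [b, B]
  have hg : AdjoinSimple.gen ℚ s * AdjoinSimple.gen ℚ s = algebraMap ℚ _ (d : ℚ) := by
    apply Subtype.ext
    simp [← pow_two, hs]
  rw [← Algebra.norm_norm (S := ℚ⟮s⟯)]
  set y := Algebra.norm ℚ⟮s⟯ x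
  have hy := b.sum_repr y
  rw [Fin.sum_univ_two, hb0, hb1] at hy
  set u := b.repr y 0
  set v := b.repr y 1
  refine ⟨u, v, ?_⟩
  rw [← hy, Algebra.norm_eq_matrix_det b, Matrix.det_fin_two]
  have r0 : b.repr 1 = Finsupp.single 0 1 := by rw [← hb0, b.repr_self]
  have r1 : b.repr (AdjoinSimple.gen ℚ s) = Finsupp.single 1 1 := by rw [← hb1, b.repr_self]
  have e1 : (u • (1 : ℚ⟮s⟯) + v • AdjoinSimple.gen ℚ s) * AdjoinSimple.gen ℚ s
      = (v * d) • (1 : ℚ⟮s⟯) + u • AdjoinSimple.gen ℚ s := by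
    rw [add_mul, smul_mul_assoc, smul_mul_assoc, hg, Algebra.algebraMap_eq_smul_one, smul_smul, one_mul, add_comm]
  simp only [Algebra.leftMulMatrix_eq_repr_mul, hb0, hb1, mul_one, e1]
  simp only [map_add, map_smul, r0, r1]
  simp
  ring

open Matrix in
lemma discr_dvd (hdeg : Module.finrank ℚ K = 4) (c : Fin 4 → 𝓞 K) :
    ∃ n : ℤ, Algebra.discr ℚ (fun i => (c i : K)) = n ^ 2 * (discr K : ℚ) := by
  have hcard : Fintype.card (Module.Free.ChooseBasisIndex ℤ (𝓞 K)) = 4 := by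
    rw [← Module.finrank_eq_card_chooseBasisIndex, RingOfIntegers.rank, hdeg]
  let e := Fintype.equivFinOfCardEq hcard
  let b := (RingOfIntegers.basis K).reindex e
  let P := b.toMatrix c
  refine ⟨P.det, ?_⟩
  have h1 : (fun i => (c i : K)) = (fun i => (b i : K)) ᵥ*
      (P.map (fun z : ℤ => (z : ℚ))).map (algebraMap ℚ K) := by
    ext i
    have := b.sum_toMatrix_smul_self c i
    rw [← this]
    simp [Matrix.vecMul, dotProduct, P, mul_comm]
  rw [h1, Algebra.discr_of_matrix_vecMul, coe_discr]
  have h2 : (fun i => (b i : K)) = (integralBasis K) ∘ e.symm := by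
    ext i
    simp [b, integralBasis_apply]
  rw [h2]
  congr 1
  · congr 1
    exact (Int.cast_det P).symm
  · exact Algebra.discr_reindex ℚ (integralBasis K) e

lemma discr_biquad (d₁ d₂ : ℤ) (s₁ s₂ : K) (hs₁ : s₁ ^ 2 = (d₁ : K)) (hs₂ : s₂ ^ 2 = (d₂ : K))
    (hd₁ : ¬ IsSquare d₁) (hd₂ : ¬ IsSquare d₂) (hd : ¬ IsSquare (d₁ * d₂))
    (hdeg : Module.finrank ℚ K = 4) :
    Algebra.discr ℚ ![1, s₁, s₂, s₁ * s₂] = 256 * d₁ ^ 2 * d₂ ^ 2 := by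
  have t0 : ∀ q : ℤ, Algebra.trace ℚ K (q : K) = 4 * q := by
    intro q
    have := Algebra.trace_algebraMap (R := ℚ) (S := K) (q : ℚ)
    rw [hdeg] at this
    simpa using this
  have tq : ∀ (q : ℤ) (x : K), Algebra.trace ℚ K ((q : K) * x) = q * Algebra.trace ℚ K x := by
    intro q x
    have := (Algebra.trace ℚ K).map_smul (q : ℚ) x
    simpa [Algebra.smul_def] using this
  have t1 := trace_sqrt d₁ s₁ hs₁ hd₁
  have t2 := trace_sqrt d₂ s₂ hs₂ hd₂
  have t3 := trace_sqrt (d₁ * d₂) (s₁ * s₂) (by rw [mul_pow, hs₁, hs₂]; push_cast; rfl) hd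
  have t1' : Algebra.trace ℚ K 1 = 4 := by simpa using t0 1
  have hM : Algebra.traceMatrix ℚ ![1, s₁, s₂, s₁ * s₂] =
      Matrix.diagonal ![4, 4 * (d₁ : ℚ), 4 * (d₂ : ℚ), 4 * (d₁ * d₂ : ℚ)] := by
    have m11 : s₁ * s₁ = (d₁ : K) := by rw [← pow_two, hs₁]
    have m22 : s₂ * s₂ = (d₂ : K) := by rw [← pow_two, hs₂]
    have m13 : s₁ * (s₁ * s₂) = (d₁ : K) * s₂ := by rw [← hs₁]; ring
    have m31 : s₁ * s₂ * s₁ = (d₁ : K) * s₂ := by rw [← hs₁]; ring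
    have m23 : s₂ * (s₁ * s₂) = (d₂ : K) * s₁ := by rw [← hs₂]; ring
    have m32 : s₁ * s₂ * s₂ = (d₂ : K) * s₁ := by rw [← hs₂]; ring
    have m33 : s₁ * s₂ * (s₁ * s₂) = ((d₁ * d₂ : ℤ) : K) := by
      push_cast; rw [← hs₁, ← hs₂]; ring
    have m21 : s₂ * s₁ = s₁ * s₂ := mul_comm _ _
    ext i j
    fin_cases i <;> fin_cases j <;>
      simp [Algebra.traceMatrix_apply, Algebra.traceForm_apply, m11, m22, m13, m31, m23, m32, m33,
        m21, t0, tq, t1, t2, t3, t1', -Int.cast_mul] <;> push_cast <;> ring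
  rw [Algebra.discr_def, hM, Matrix.det_diagonal, Fin.prod_univ_four]
  simp
  ring

lemma prime_dvd_discr (d₁ d₂ : ℤ) (s₁ s₂ : K) (hs₁ : s₁ ^ 2 = (d₁ : K)) (hs₂ : s₂ ^ 2 = (d₂ : K))
    (hd₁ : ¬ IsSquare d₁) (hd₂ : ¬ IsSquare d₂) (hd : ¬ IsSquare (d₁ * d₂))
    (hdeg : Module.finrank ℚ K = 4) (p : ℕ) (hp : p.Prime) (hpd : (p : ℤ) ∣ discr K) :
    p = 2 ∨ (p : ℤ) ∣ d₁ ∨ (p : ℤ) ∣ d₂ := by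
  have i1 : IsIntegral ℤ s₁ := ⟨Polynomial.X ^ 2 - Polynomial.C d₁,
    Polynomial.monic_X_pow_sub_C _ (by norm_num), by simp [hs₁, -map_intCast, -eq_intCast]⟩
  have i2 : IsIntegral ℤ s₂ := ⟨Polynomial.X ^ 2 - Polynomial.C d₂,
    Polynomial.monic_X_pow_sub_C _ (by norm_num), by simp [hs₂, -map_intCast, -eq_intCast]⟩
  obtain ⟨r₁, hr₁⟩ : ∃ r : 𝓞 K, (r : K) = s₁ := ⟨⟨_, i1⟩, rfl⟩
  obtain ⟨r₂, hr₂⟩ : ∃ r : 𝓞 K, (r : K) = s₂ := ⟨⟨_, i2⟩, rfl⟩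
  obtain ⟨n, hn⟩ := discr_dvd hdeg ![1, r₁, r₂, r₁ * r₂]
  have : (fun i => ((![1, r₁, r₂, r₁ * r₂] : Fin 4 → 𝓞 K) i : K)) =
      ![1, s₁, s₂, s₁ * s₂] := by
    ext i; fin_cases i <;> simp [hr₁, hr₂]
  rw [this, discr_biquad d₁ d₂ s₁ s₂ hs₁ hs₂ hd₁ hd₂ hd hdeg] at hn
  have hn' : 256 * d₁ ^ 2 * d₂ ^ 2 = n ^ 2 * discr K := by exact_mod_cast hn
  have hp' : Prime (p : ℤ) := Nat.prime_iff_prime_int.mp hp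
  have h : (p : ℤ) ∣ 2 ^ 8 * d₁ ^ 2 * d₂ ^ 2 := by
    norm_num; rw [hn']; exact Dvd.dvd.mul_left hpd _
  rcases hp'.dvd_or_dvd h with h | h
  · rcases hp'.dvd_or_dvd h with h | h
    · left
      have := hp'.dvd_of_dvd_pow h
      exact (Nat.prime_dvd_prime_iff_eq hp Nat.prime_two).mp (by exact_mod_cast this)
    · exact Or.inr (Or.inl (hp'.dvd_of_dvd_pow h))
  · exact Or.inr (Or.inr (hp'.dvd_of_dvd_pow h))

open Matrix in
lemma two_not_dvd_discr (d₁ d₂ : ℤ) (s₁ s₂ : K) (hs₁ : s₁ ^ 2 = (d₁ : K)) (hs₂ : s₂ ^ 2 = (d₂ : K))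
    (hd₁ : ¬ IsSquare d₁) (hd₂ : ¬ IsSquare d₂) (hd : ¬ IsSquare (d₁ * d₂))
    (hdeg : Module.finrank ℚ K = 4) (h1 : d₁ % 4 = 1) (h2 : d₂ % 4 = 1) :
    ¬ (2 : ℤ) ∣ discr K := by
  intro hpd
  have key : ∀ (d : ℤ) (s : K), s ^ 2 = (d : K) → d % 4 = 1 → IsIntegral ℤ ((1 + s) / 2) := by
    intro d s hs h
    obtain ⟨k, rfl⟩ : ∃ k, d = 4 * k + 1 := ⟨d / 4, by omega⟩
    refine ⟨Polynomial.X ^ 2 - Polynomial.X - Polynomial.C k, by monicity!, ?_⟩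
    simp [-map_intCast, -eq_intCast]
    push_cast at hs
    linear_combination hs / 4
  have i1 := key d₁ s₁ hs₁ h1
  have i2 := key d₂ s₂ hs₂ h2
  set w₁ := (1 + s₁) / 2 with hw₁
  set w₂ := (1 + s₂) / 2 with hw₂
  obtain ⟨r₁, hr₁⟩ : ∃ r : 𝓞 K, (r : K) = w₁ := ⟨⟨_, i1⟩, rfl⟩
  obtain ⟨r₂, hr₂⟩ : ∃ r : 𝓞 K, (r : K) = w₂ := ⟨⟨_, i2⟩, rfl⟩
  obtain ⟨n, hn⟩ := discr_dvd hdeg ![1, r₁, r₂, r₁ * r₂]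
  have : (fun i => ((![1, r₁, r₂, r₁ * r₂] : Fin 4 → 𝓞 K) i : K)) =
      ![1, s₁, s₂, s₁ * s₂] ᵥ* (!![1, 1/2, 1/2, 1/4; 0, 1/2, 0, 1/4; 0, 0, 1/2, 1/4; 0,0,0,1/4] :
        Matrix (Fin 4) (Fin 4) ℚ).map (algebraMap ℚ K) := by
    ext i; fin_cases i <;> simp [Matrix.vecMul, dotProduct, Fin.sum_univ_four, hr₁, hr₂, hw₁, hw₂] <;> ring
  rw [this, Algebra.discr_of_matrix_vecMul, discr_biquad d₁ d₂ s₁ s₂ hs₁ hs₂ hd₁ hd₂ hd hdeg] at hn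
  have hdet : (!![1, 1/2, 1/2, 1/4; 0, 1/2, 0, 1/4; 0, 0, 1/2, 1/4; 0,0,0,1/4] :
        Matrix (Fin 4) (Fin 4) ℚ).det = 1 / 16 := by
    rw [Matrix.det_of_upperTriangular]
    · simp [Fin.prod_univ_four]; norm_num
    · intro i j hij
      fin_cases i <;> fin_cases j <;> simp at hij ⊢
  rw [hdet] at hn
  have hn' : d₁ ^ 2 * d₂ ^ 2 = n ^ 2 * discr K := by
    have : (d₁ : ℚ) ^ 2 * d₂ ^ 2 = n ^ 2 * discr K := by rw [← hn]; ring
    exact_mod_cast this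
  have h : (2 : ℤ) ∣ d₁ ^ 2 * d₂ ^ 2 := by
    rw [hn']; exact Dvd.dvd.mul_left hpd _
  rcases Int.prime_two.dvd_or_dvd h with h | h <;>
  · have := Int.prime_two.dvd_of_dvd_pow h
    omega
end prelim

section arith

lemma clear_denoms (m d : ℤ) (X u v : ℚ) (hX : X ≠ 0) (h : m * X ^ 2 = u ^ 2 - d * v ^ 2) :
    ∃ x y z : ℤ, x ≠ 0 ∧ m * x ^ 2 = y ^ 2 - d * z ^ 2 := by
  refine ⟨X.num * u.den * v.den, u.num * X.den * v.den, v.num * X.den * u.den, ?_, ?_⟩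
  · have := X.num_ne_zero.mpr hX
    have := u.den_nz
    have := v.den_nz
    positivity
  · have e1 : (X.num : ℚ) = X * X.den := (Rat.mul_den_eq_num X).symm
    have e2 : (u.num : ℚ) = u * u.den := (Rat.mul_den_eq_num u).symm
    have e3 : (v.num : ℚ) = v * v.den := (Rat.mul_den_eq_num v).symm
    have : (m : ℚ) * (X.num * u.den * v.den) ^ 2 =
        (u.num * X.den * v.den) ^ 2 - d * (v.num * X.den * u.den) ^ 2 := by
      rw [e1, e2, e3]
      linear_combination (X.den * u.den * v.den : ℚ) ^ 2 * h
    exact_mod_cast this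

lemma isSquare_mod_aux (p : ℕ) (hp : p.Prime) (d m : ℤ) (hd : Squarefree d) (hpd : (p : ℤ) ∣ d) :
    ∀ n : ℕ, ∀ x y z : ℤ, x.natAbs = n → x ≠ 0 → m * x ^ 2 = y ^ 2 - d * z ^ 2 →
      IsSquare (m : ZMod p) := by
  have := Fact.mk hp
  have hp' : Prime (p : ℤ) := Nat.prime_iff_prime_int.mp hp
  intro n
  induction n using Nat.strong_induction_on with
  | _ n ih =>
  intro x y z hn hx h
  by_cases hpx : (p : ℤ) ∣ x
  · have hpy : (p : ℤ) ∣ y := by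
      apply hp'.dvd_of_dvd_pow (n := 2)
      have : y ^ 2 = m * x ^ 2 + d * z ^ 2 := by linarith
      rw [this]
      exact dvd_add (Dvd.dvd.mul_left (dvd_pow hpx two_ne_zero) _) (Dvd.dvd.mul_right hpd _)
    obtain ⟨x', rfl⟩ := hpx
    obtain ⟨y', rfl⟩ := hpy
    obtain ⟨d', rfl⟩ := hpd
    have hp0 : (p : ℤ) ≠ 0 := hp'.ne_zero
    have h2 : d' * z ^ 2 = p * (y' ^ 2 - m * x' ^ 2) := by
      apply mul_left_cancel₀ hp0
      linear_combination h
    have hpz : (p : ℤ) ∣ z := by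
      have : (p : ℤ) ∣ d' * z ^ 2 := ⟨_, h2⟩
      rcases hp'.dvd_or_dvd this with h3 | h3
      · exact absurd (hd p (mul_dvd_mul_left _ h3)) hp'.not_isUnit
      · exact hp'.dvd_of_dvd_pow h3
    obtain ⟨z', rfl⟩ := hpz
    have hx' : x' ≠ 0 := by rintro rfl; simp at hx
    refine ih x'.natAbs ?_ x' y' z' rfl hx' ?_
    · rw [← hn, Int.natAbs_mul, Int.natAbs_natCast]
      have := Int.natAbs_pos.mpr hx'
      nlinarith [hp.two_le]
    · have : (p : ℤ) ^ 2 ≠ 0 := pow_ne_zero _ hp0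
      apply mul_left_cancel₀ this
      linear_combination h
  · have h3 : (m : ZMod p) * (x : ZMod p) ^ 2 = (y : ZMod p) ^ 2 := by
      have := congrArg (Int.cast : ℤ → ZMod p) h
      push_cast at this
      rw [(ZMod.intCast_zmod_eq_zero_iff_dvd d p).mpr hpd] at this
      simpa using this
    have hx0 : (x : ZMod p) ≠ 0 := fun h => hpx ((ZMod.intCast_zmod_eq_zero_iff_dvd x p).mp h)
    refine ⟨y / x, ?_⟩
    field_simp
    exact h3

lemma isSquare_mod (p : ℕ) (hp : p.Prime) (d m : ℤ) (hd : Squarefree d) (hpd : (p : ℤ) ∣ d)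
    (X u v : ℚ) (hX : X ≠ 0) (h : m * X ^ 2 = u ^ 2 - d * v ^ 2) : IsSquare (m : ZMod p) := by
  obtain ⟨x, y, z, hx, h⟩ := clear_denoms m d X u v hX h
  exact isSquare_mod_aux p hp d m hd hpd _ x y z rfl hx h

lemma mod_four_aux (d m : ℤ) (hd : d % 4 = 3) (hm : m % 2 = 1) :
    ∀ n : ℕ, ∀ x y z : ℤ, x.natAbs = n → x ≠ 0 → m * x ^ 2 = y ^ 2 - d * z ^ 2 → m % 4 = 1 := by
  intro n
  induction n using Nat.strong_induction_on with
  | _ n ih =>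
  intro x y z hn hx h
  have hsq : ∀ t : ℤ, (t % 2 = 0 ∧ t ^ 2 % 4 = 0) ∨ (t % 2 = 1 ∧ t ^ 2 % 4 = 1) := by
    intro t
    have : t % 4 = 0 ∨ t % 4 = 1 ∨ t % 4 = 2 ∨ t % 4 = 3 := by omega
    rcases this with h | h | h | h <;> simp [pow_two, Int.mul_emod, h] <;> omega
  have hmod : (m * x ^ 2) % 4 = ((y ^ 2) % 4 + (z ^ 2) % 4) % 4 := by
    rw [h]
    obtain ⟨k, hk⟩ : ∃ k, d = 4 * k + 3 := ⟨d / 4, by omega⟩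
    rw [hk, show y ^ 2 - (4 * k + 3) * z ^ 2 = y ^ 2 + z ^ 2 + 4 * (- (k + 1) * z ^ 2) by ring]
    omega
  rw [Int.mul_emod] at hmod
  have hm4 : m % 4 = 1 ∨ m % 4 = 3 := by omega
  rcases hsq x with ⟨hx2, hx4⟩ | ⟨hx2, hx4⟩
  · rw [hx4] at hmod
    have hy : y % 2 = 0 ∧ z % 2 = 0 := by
      rcases hsq y with ⟨a, b⟩ | ⟨a, b⟩ <;> rcases hsq z with ⟨a', b'⟩ | ⟨a', b'⟩ <;>
        rw [b, b'] at hmod <;> simp at hmod <;> omega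
    obtain ⟨x', rfl⟩ : ∃ k, x = 2 * k := ⟨x / 2, by omega⟩
    obtain ⟨y', rfl⟩ : ∃ k, y = 2 * k := ⟨y / 2, by omega⟩
    obtain ⟨z', rfl⟩ : ∃ k, z = 2 * k := ⟨z / 2, by omega⟩
    refine ih x'.natAbs (by omega) x' y' z' rfl (by omega) ?_
    linarith
  · rw [hx4] at hmod
    rcases hsq y with ⟨a, b⟩ | ⟨a, b⟩ <;> rcases hsq z with ⟨a', b'⟩ | ⟨a', b'⟩ <;>
        rw [b, b'] at hmod <;> simp at hmod <;> omega

lemma mod_four (d m : ℤ) (hd : d % 4 = 3) (hm : m % 2 = 1)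
    (X u v : ℚ) (hX : X ≠ 0) (h : m * X ^ 2 = u ^ 2 - d * v ^ 2) : m % 4 = 1 := by
  obtain ⟨x, y, z, hx, h⟩ := clear_denoms m d X u v hX h
  exact mod_four_aux d m hd hm _ x y z rfl hx h

end arith

section classgp
variable {K : Type*} [Field K] [NumberField K]

open nonZeroDivisors in
lemma norm_of_square_class (I J : (Ideal (𝓞 K))⁰) (h : ClassGroup.mk0 I = ClassGroup.mk0 J ^ 2) :
    ∃ (ε : ℤ) (X : ℚ) (c : K), (ε = 1 ∨ ε = -1) ∧ X ≠ 0 ∧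
      ((ε * (Ideal.absNorm I.1 : ℤ) : ℤ) : ℚ) * X ^ 2 = Algebra.norm ℚ c := by
  rw [← map_pow, ClassGroup.mk0_eq_mk0_iff] at h
  obtain ⟨x, y, hx, hy, h⟩ := h
  have hN := congrArg Ideal.absNorm h
  rw [map_mul, map_mul, SubmonoidClass.coe_pow, map_pow, Ideal.absNorm_span_singleton,
    Ideal.absNorm_span_singleton] at hN
  set a := Algebra.norm ℤ x with ha
  set b := Algebra.norm ℤ y with hb
  have ha0 : a ≠ 0 := Algebra.norm_ne_zero_iff.mpr hx
  have hJ : Ideal.absNorm J.1 ≠ 0 := Ideal.absNorm_ne_zero_of_nonZeroDivisors J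
  have hc : Algebra.norm ℚ ((x * y : 𝓞 K) : K) = a * b := by
    rw [← Algebra.coe_norm_int, map_mul]; push_cast; rfl
  have hN' : |(a : ℚ)| * (Ideal.absNorm I.1 : ℚ) = |(b : ℚ)| * (Ideal.absNorm J.1 : ℚ) ^ 2 := by
    have := congrArg (Nat.cast : ℕ → ℚ) hN
    push_cast at this
    simpa [Nat.cast_natAbs] using this
  have hJ' : (Ideal.absNorm J.1 : ℚ) ≠ 0 := by exact_mod_cast hJ
  have ha' : (a : ℚ) ≠ 0 := by exact_mod_cast ha0
  obtain ⟨ε, hε, h3⟩ : ∃ ε : ℤ, (ε = 1 ∨ ε = -1) ∧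
      ε * (a : ℚ) * (Ideal.absNorm I.1 : ℚ) = b * (Ideal.absNorm J.1 : ℚ) ^ 2 := by
    rcases abs_choice (a : ℚ) with h1 | h1 <;> rcases abs_choice (b : ℚ) with h2 | h2 <;>
      rw [h1, h2] at hN'
    · exact ⟨1, by simp, by push_cast; linarith⟩
    · exact ⟨-1, by simp, by push_cast; linarith⟩
    · exact ⟨-1, by simp, by push_cast; linarith⟩
    · exact ⟨1, by simp, by push_cast; linarith⟩
  refine ⟨ε, a / Ideal.absNorm J.1, ((x * y : 𝓞 K) : K), hε, div_ne_zero ha' hJ', ?_⟩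
  rw [hc]
  push_cast
  field_simp
  linear_combination h3

open nonZeroDivisors in
lemma cyclic_norm (hcyc : IsCyclic (ClassGroup (𝓞 K))) (I₁ I₂ : Ideal (𝓞 K)) (q₁ q₂ : ℕ)
    (h₁ : Ideal.absNorm I₁ = q₁) (h₂ : Ideal.absNorm I₂ = q₂) (h0₁ : q₁ ≠ 0) (h0₂ : q₂ ≠ 0) :
    ∃ m : ℕ, (m = q₁ ∨ m = q₂ ∨ m = q₁ * q₂) ∧ ∃ (ε : ℤ) (X : ℚ) (c : K), (ε = 1 ∨ ε = -1) ∧ X ≠ 0 ∧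
      ((ε * (m : ℤ) : ℤ) : ℚ) * X ^ 2 = Algebra.norm ℚ c := by
  have hI₁ : I₁ ∈ (Ideal (𝓞 K))⁰ := by
    rw [mem_nonZeroDivisors_iff_ne_zero]; rintro rfl; simp at h₁; omega
  have hI₂ : I₂ ∈ (Ideal (𝓞 K))⁰ := by
    rw [mem_nonZeroDivisors_iff_ne_zero]; rintro rfl; simp at h₂; omega
  let A : (Ideal (𝓞 K))⁰ := ⟨I₁, hI₁⟩
  let B : (Ideal (𝓞 K))⁰ := ⟨I₂, hI₂⟩
  obtain ⟨g, hg⟩ := hcyc.exists_generator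
  obtain ⟨a, ha⟩ := hg (ClassGroup.mk0 A)
  obtain ⟨b, hb⟩ := hg (ClassGroup.mk0 B)
  simp only at ha hb
  have key : ∀ (I : (Ideal (𝓞 K))⁰) (n : ℤ), ClassGroup.mk0 I = g ^ (n + n) →
      ∃ J : (Ideal (𝓞 K))⁰, ClassGroup.mk0 I = ClassGroup.mk0 J ^ 2 := by
    intro I n h
    obtain ⟨J, hJ⟩ := ClassGroup.mk0_surjective (g ^ n)
    exact ⟨J, by rw [h, hJ, zpow_add, pow_two]⟩
  rcases Int.even_or_odd a with ⟨n, hn⟩ | hoa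
  · obtain ⟨J, hJ⟩ := key A n (by rw [← hn, ha])
    refine ⟨q₁, by simp, ?_⟩
    rw [← h₁]
    exact norm_of_square_class A J hJ
  rcases Int.even_or_odd b with ⟨n, hn⟩ | hob
  · obtain ⟨J, hJ⟩ := key B n (by rw [← hn, hb])
    refine ⟨q₂, by simp, ?_⟩
    rw [← h₂]
    exact norm_of_square_class B J hJ
  · obtain ⟨n, hn⟩ := hoa.add_odd hob
    obtain ⟨J, hJ⟩ := key (A * B) n (by rw [← hn, map_mul, ← ha, ← hb, zpow_add])
    refine ⟨q₁ * q₂, by simp, ?_⟩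
    have : q₁ * q₂ = Ideal.absNorm (A * B).1 := by
      simp [A, B, h₁, h₂]
    rw [this]
    exact norm_of_square_class (A * B) J hJ

end classgp

section split
variable {K : Type*} [Field K] [NumberField K]

lemma isGalois_biquad (d₁ d₂ : ℤ) (s₁ s₂ : K) (hs₁ : s₁ ^ 2 = (d₁ : K)) (hs₂ : s₂ ^ 2 = (d₂ : K))
    (hgen : IntermediateField.adjoin ℚ {s₁, s₂} = ⊤) : IsGalois ℚ K := by
  have key : ∀ (d : ℤ) (s : K), s ^ 2 = (d : K) → ((minpoly ℚ s).map (algebraMap ℚ K)).Splits := by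
    intro d s hs
    have h1 : minpoly ℚ s ∣ Polynomial.X ^ 2 - Polynomial.C (d : ℚ) :=
      minpoly.dvd _ _ (by simp [hs])
    have h2 : (Polynomial.X ^ 2 - Polynomial.C (d : ℚ)).map (algebraMap ℚ K)
        = (Polynomial.X - Polynomial.C s) * (Polynomial.X - Polynomial.C (-s)) := by
      rw [Polynomial.map_sub, Polynomial.map_pow, Polynomial.map_X, Polynomial.map_C]
      have : algebraMap ℚ K (d : ℚ) = s ^ 2 := by simp [hs]
      rw [this, Polynomial.C_pow, Polynomial.C_neg]
      ring
    have h3 : ((Polynomial.X ^ 2 - Polynomial.C (d : ℚ)).map (algebraMap ℚ K)).Splits := by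
      rw [h2]
      exact (Polynomial.Splits.X_sub_C _).mul (Polynomial.Splits.X_sub_C _)
    refine h3.of_dvd ?_ (Polynomial.map_dvd _ h1)
    rw [Polynomial.map_ne_zero_iff (algebraMap ℚ K).injective]
    exact (Polynomial.monic_X_pow_sub_C _ (by norm_num)).ne_zero
  have hn : Normal ℚ K := by
    refine normal_iff.mpr fun x => ⟨IsIntegral.of_finite ℚ x, ?_⟩
    have hx : x ∈ IntermediateField.adjoin ℚ {s₁, s₂} := by rw [hgen]; trivial
    refine IntermediateField.splits_of_mem_adjoin ℚ K (fun y hy => ⟨IsIntegral.of_finite ℚ y, ?_⟩) hx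
    rcases hy with rfl | rfl
    · exact key d₁ _ hs₁
    · exact key d₂ _ hs₂
  exact ⟨⟩

lemma aut_eq_one (s₁ s₂ : K) (hgen : IntermediateField.adjoin ℚ {s₁, s₂} = ⊤)
    (σ : Gal(K/ℚ)) (h1 : σ s₁ = s₁) (h2 : σ s₂ = s₂) : σ = 1 := by
  ext x
  have hx : x ∈ IntermediateField.adjoin ℚ {s₁, s₂} := by rw [hgen]; trivial
  induction hx using IntermediateField.adjoin_induction with
  | mem x hx => rcases hx with rfl | rfl <;> simpa
  | algebraMap x => simp
  | add x y _ _ hx hy => simp_all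
  | inv x _ hx => simp_all
  | mul x y _ _ hx hy => simp_all

lemma exists_split (d₁ d₂ : ℤ) (s₁ s₂ : K) (hs₁ : s₁ ^ 2 = (d₁ : K)) (hs₂ : s₂ ^ 2 = (d₂ : K))
    (hgen : IntermediateField.adjoin ℚ {s₁, s₂} = ⊤) (q : ℕ) (hq : q.Prime) (hq2 : q ≠ 2)
    (h1 : ¬ (q : ℤ) ∣ d₁) (h2 : ¬ (q : ℤ) ∣ d₂)
    (hq1 : IsSquare (d₁ : ZMod q)) (hq2' : IsSquare (d₂ : ZMod q)) :
    ∃ I : Ideal (𝓞 K), Ideal.absNorm I = q := by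
  have := isGalois_biquad d₁ d₂ s₁ s₂ hs₁ hs₂ hgen
  have := Fact.mk hq
  have hne : Ideal.span {(q : 𝓞 K)} ≠ ⊤ := by
    intro h
    have h2 := congrArg Ideal.absNorm h
    rw [Ideal.absNorm_top, Ideal.absNorm_span_singleton] at h2
    have h3 := Algebra.norm_algebraMap (R := ℤ) (S := 𝓞 K) (q : ℤ)
    rw [map_natCast] at h3
    rw [h3, Int.natAbs_pow, Int.natAbs_natCast] at h2
    rcases Nat.pow_eq_one.mp h2 with h4 | h4
    · exact hq.one_lt.ne' h4
    · have : 0 < Module.finrank ℤ (𝓞 K) := Module.finrank_pos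
      omega
  obtain ⟨Q, hQ, hle⟩ := Ideal.exists_le_maximal _ hne
  have hqQ : (q : 𝓞 K) ∈ Q := hle (Ideal.mem_span_singleton_self _)
  have hQp := hQ.isPrime
  have hQ0 : Q ≠ ⊥ := by
    rintro rfl
    simp at hqQ
    exact hq.ne_zero hqQ
  have hcardne : Ideal.absNorm Q ≠ 0 := by rwa [Ne, Ideal.absNorm_eq_zero_iff]
  have hfin : Finite (𝓞 K ⧸ Q) := by
    rw [Ideal.absNorm_apply, Submodule.cardQuot_apply] at hcardne
    exact Nat.finite_of_card_ne_zero hcardne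
  have hG : IsGaloisGroup Gal(K/ℚ) ℤ (𝓞 K) := IsGaloisGroup.of_isFractionRing Gal(K/ℚ) ℤ (𝓞 K) ℚ K
  obtain ⟨σ, hσ⟩ := IsArithFrobAt.exists_of_isInvariant ℤ Gal(K/ℚ) Q
  have hund : Q.under ℤ = Ideal.span {(q : ℤ)} := by
    symm
    have hm : (Ideal.span {(q : ℤ)}).IsMaximal :=
      PrincipalIdealRing.isMaximal_of_irreducible (Nat.prime_iff_prime_int.mp hq).irreducible
    apply hm.eq_of_le
    · exact (Ideal.IsPrime.under ℤ Q).ne_top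
    · rw [Ideal.span_singleton_le_iff_mem, Ideal.mem_comap]
      simpa using hqQ
  have hcard : Nat.card (ℤ ⧸ Q.under ℤ) = q := by
    rw [hund, Nat.card_congr (Int.quotientSpanNatEquivZMod q).toEquiv, Nat.card_zmod]
  have hfrob : ∀ x : 𝓞 K, σ • x - x ^ q ∈ Q := by
    intro x
    have := hσ x
    rw [hcard] at this
    exact this
  have hintQ : ∀ n : ℤ, (n : 𝓞 K) ∈ Q → (q : ℤ) ∣ n := by
    intro n hn
    have : n ∈ Q.under ℤ := by rw [Ideal.mem_comap]; simpa using hn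
    rwa [hund, Ideal.mem_span_singleton] at this
  have hfix : ∀ (d : ℤ) (s : K), s ^ 2 = (d : K) → ¬ (q : ℤ) ∣ d → IsSquare (d : ZMod q) → σ s = s := by
    intro d s hs hd hsq
    have hi : IsIntegral ℤ s := ⟨Polynomial.X ^ 2 - Polynomial.C d,
      Polynomial.monic_X_pow_sub_C _ (by norm_num), by simp [hs, -map_intCast, -eq_intCast]⟩
    obtain ⟨r, hr⟩ : ∃ r : 𝓞 K, (r : K) = s := ⟨⟨_, hi⟩, rfl⟩
    have hrr : r ^ 2 = (d : 𝓞 K) := by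
      apply RingOfIntegers.ext
      simp [hr, hs]
    have hsr : ((σ • r : 𝓞 K) : K) = σ s := by rw [← hr]; rfl
    have hsq2 : (σ s) ^ 2 = s ^ 2 := by rw [← map_pow, hs, map_intCast]
    rcases sq_eq_sq_iff_eq_or_eq_neg.mp hsq2 with h | h
    · exact h
    exfalso
    have hneg : σ • r = -r := by
      apply RingOfIntegers.ext
      rw [hsr, h]; simp [hr]
    have hf := hfrob r
    have hqodd : q = 2 * (q / 2) + 1 := by
      have := hq.eq_two_or_odd
      omega
    have hpow : r ^ q = (d : 𝓞 K) ^ (q / 2) * r := by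
      conv_lhs => rw [hqodd, pow_succ, pow_mul, hrr]
    have heul : ((d ^ (q / 2) - 1 : ℤ) : 𝓞 K) ∈ Q := by
      have hd0 : (d : ZMod q) ≠ 0 := fun h => hd ((ZMod.intCast_zmod_eq_zero_iff_dvd d q).mp h)
      have := (ZMod.euler_criterion q hd0).mp hsq
      have h3 : (q : ℤ) ∣ d ^ (q / 2) - 1 := by
        rw [← ZMod.intCast_zmod_eq_zero_iff_dvd]; push_cast; rw [this]; ring
      obtain ⟨k, hk⟩ := h3
      rw [hk]; push_cast
      exact Ideal.mul_mem_right _ _ hqQ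
    have h2r : (2 : 𝓞 K) * r ∈ Q := by
      have h4 := Ideal.mul_mem_right r Q heul
      have h5 := Q.neg_mem (Q.add_mem hf h4)
      rw [hneg, hpow] at h5
      push_cast at h5
      convert h5 using 1
      ring
    rcases hQp.mem_or_mem h2r with h6 | h6
    · have := hintQ 2 (by simpa using h6)
      have := Nat.le_of_dvd (by norm_num) (by exact_mod_cast this : q ∣ 2)
      have := hq.two_le
      omega
    · have : (d : 𝓞 K) ∈ Q := by rw [← hrr]; exact Ideal.pow_mem_of_mem Q h6 2 (by norm_num)
      exact hd (hintQ d this)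
  have hσ1 : σ = 1 := aut_eq_one s₁ s₂ hgen σ (hfix d₁ s₁ hs₁ h1 hq1) (hfix d₂ s₂ hs₂ h2 hq2')
  subst hσ1
  refine ⟨Q, ?_⟩
  rw [Ideal.absNorm_apply, Submodule.cardQuot_apply]
  let _ := Ideal.Quotient.field Q
  apply le_antisymm
  · have := Fintype.ofFinite (𝓞 K ⧸ Q)
    rw [Nat.card_eq_fintype_card]
    have hX : (Polynomial.X ^ q - Polynomial.X : Polynomial (𝓞 K ⧸ Q)) ≠ 0 :=
      FiniteField.X_pow_card_sub_X_ne_zero _ hq.one_lt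
    have hroot : (Finset.univ : Finset (𝓞 K ⧸ Q)).val ≤
        (Polynomial.X ^ q - Polynomial.X : Polynomial (𝓞 K ⧸ Q)).roots := by
      rw [Multiset.le_iff_subset Finset.univ.nodup]
      intro x _
      obtain ⟨y, rfl⟩ := Ideal.Quotient.mk_surjective x
      rw [Polynomial.mem_roots hX]
      have := hfrob y
      rw [one_smul, ← Ideal.Quotient.eq] at this
      simp [← map_pow, ← this]
    have h7 := Multiset.card_le_card hroot
    have h8 := Polynomial.card_roots' (Polynomial.X ^ q - Polynomial.X : Polynomial (𝓞 K ⧸ Q))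
    rw [FiniteField.X_pow_card_sub_X_natDegree_eq _ hq.one_lt] at h8
    exact h7.trans h8
  · rw [← hcard]
    exact Nat.card_le_card_of_injective _ (Ideal.algebraMap_quotient_injective (R := ℤ) (I := Q))
end split

section chars

/-- The genus characters: Legendre symbol at odd primes and the character mod 4 at 2. -/
def chi (p : ℕ) (n : ℤ) : ℤ := if p = 2 then ZMod.χ₄ (n : ZMod 4) else jacobiSym n p

lemma chi_mul (p : ℕ) (a b : ℤ) : chi p (a * b) = chi p a * chi p b := by
  unfold chi
  split_ifs
  · push_cast; rw [map_mul]
  · exact jacobiSym.mul_left a b p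

/-- The modulus of the genus character. -/
def modul (p : ℕ) : ℕ := if p = 2 then 4 else p

lemma chi_congr (p a b : ℕ) (h : a ≡ b [MOD modul p]) : chi p a = chi p b := by
  unfold chi
  unfold modul at h
  split_ifs at h ⊢ with h2
  · have : ((a : ℕ) : ZMod 4) = (b : ZMod 4) := (ZMod.natCast_eq_natCast_iff _ _ _).mpr h
    simp [this]
  · rw [jacobiSym.mod_left a p, jacobiSym.mod_left b p]
    congr 1
    exact_mod_cast h

lemma exists_chi (p : ℕ) (hp : p.Prime) (u : ℤˣ) :
    ∃ a : ℕ, a.Coprime (modul p) ∧ chi p a = u := by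
  have := Fact.mk hp
  unfold chi modul
  split_ifs with h2
  · rcases Int.units_eq_one_or u with rfl | rfl
    · exact ⟨1, by decide, by decide⟩
    · exact ⟨3, by decide, by decide⟩
  · rcases Int.units_eq_one_or u with rfl | rfl
    · exact ⟨1, by simp, by simp⟩
    · obtain ⟨b, hb⟩ := FiniteField.exists_nonsquare (F := ZMod p) (by rwa [ZMod.ringChar_zmod_n])
      refine ⟨b.val, ?_, ?_⟩
      · rw [Nat.coprime_comm, hp.coprime_iff_not_dvd]
        intro h
        apply hb
        have : ((b.val : ℕ) : ZMod p) = 0 := (ZMod.natCast_eq_zero_iff _ _).mpr h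
        rw [ZMod.natCast_zmod_val] at this
        rw [this]; exact IsSquare.zero
      · rw [← jacobiSym.legendreSym.to_jacobiSym]
        push_cast
        rw [legendreSym.eq_neg_one_iff]
        simpa using hb

lemma modul_coprime (p q : ℕ) (hp : p.Prime) (hq : q.Prime) (h : p ≠ q) :
    (modul p).Coprime (modul q) := by
  have h0 := (Nat.coprime_primes hp hq).mpr h
  unfold modul
  split_ifs with h1 h2 h2
  · omega
  · subst h1; exact Nat.Coprime.pow_left 2 h0
  · subst h2; exact Nat.Coprime.pow_right 2 h0
  · exact h0

lemma exists_prime_chi (T : Finset ℕ) (hT : ∀ p ∈ T, p.Prime) (h : ℕ → ℤˣ) (N : ℕ) :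
    ∃ q > N, q.Prime ∧ ∀ p ∈ T, chi p q = h p := by
  have hex : ∀ p : ℕ, ∃ a : ℕ, p.Prime → a.Coprime (modul p) ∧ chi p a = h p := by
    intro p
    by_cases hp : p.Prime
    · obtain ⟨a, ha⟩ := exists_chi p hp (h p)
      exact ⟨a, fun _ => ha⟩
    · exact ⟨0, fun h => absurd h hp⟩
  choose a ha using hex
  have hm0 : ∀ p ∈ T, modul p ≠ 0 := by
    intro p hp
    unfold modul
    have := (hT p hp).ne_zero
    split_ifs <;> omega
  obtain ⟨k, hk⟩ := Nat.chineseRemainderOfFinset a modul T hm0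
    (fun p hp q hq hpq => modul_coprime p q (hT p hp) (hT q hq) hpq)
  have hcop : k.Coprime (∏ p ∈ T, modul p) := by
    rw [Nat.coprime_prod_right_iff]
    intro p hp
    have h1 := (ha p (hT p hp)).1
    have h2 := (hk p hp).gcd_eq
    unfold Nat.Coprime at *
    rw [h2, h1]
  have hne : ∏ p ∈ T, modul p ≠ 0 := Finset.prod_ne_zero_iff.mpr hm0
  have : NeZero (∏ p ∈ T, modul p) := ⟨hne⟩
  obtain ⟨q, hqN, hq, hqk⟩ := Nat.forall_exists_prime_gt_and_eq_mod
    ((ZMod.isUnit_iff_coprime k _).mpr hcop) N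
  refine ⟨q, hqN, hq, fun p hp => ?_⟩
  rw [← (ha p (hT p hp)).2]
  apply chi_congr
  have h1 : q ≡ k [MOD ∏ p ∈ T, modul p] := (ZMod.natCast_eq_natCast_iff _ _ _).mp hqk
  exact (h1.of_dvd (Finset.dvd_prod_of_mem _ hp)).trans (hk p hp)

lemma jacobi_prod (q D : ℕ) (hD : Squarefree D) :
    jacobiSym q D = ∏ p ∈ D.primeFactors, jacobiSym q p := by
  have : ∀ T : Finset ℕ, (∀ p ∈ T, p.Prime) →
      jacobiSym q (∏ p ∈ T, p) = ∏ p ∈ T, jacobiSym q p := by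
    intro T
    induction T using Finset.induction_on with
    | empty => simp
    | insert p T hp ih =>
      intro h
      have h1 : p ≠ 0 := (h p (by simp)).ne_zero
      have h2 : ∏ p ∈ T, p ≠ 0 :=
        Finset.prod_ne_zero_iff.mpr fun r hr => (h r (by simp [hr])).ne_zero
      rw [Finset.prod_insert hp, Finset.prod_insert hp, jacobiSym.mul_right' _ h1 h2,
        ih (fun r hr => h r (by simp [hr]))]
  conv_lhs => rw [← Nat.prod_primeFactors_of_squarefree hD]
  exact this _ fun p hp => Nat.prime_of_mem_primeFactors hp

lemma recip (q D : ℕ) (hD : Squarefree D) (hDo : D % 2 = 1) (hq : q % 2 = 1) :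
    jacobiSym D q = (∏ p ∈ D.primeFactors, chi p q) * (if D % 4 = 3 then chi 2 q else 1) := by
  have h1 : ∏ p ∈ D.primeFactors, chi p q = jacobiSym q D := by
    rw [jacobi_prod q D hD]
    refine Finset.prod_congr rfl fun p hp => ?_
    have : p ≠ 2 := by
      rintro rfl
      have := Nat.dvd_of_mem_primeFactors hp
      omega
    simp [chi, this]
  have h2 : chi 2 q = if q % 4 = 3 then -1 else 1 := by
    simp only [chi, if_true]
    push_cast
    rw [ZMod.χ₄_nat_eq_if_mod_four]
    have : q % 4 = 1 ∨ q % 4 = 3 := by omega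
    rcases this with h | h <;> simp [h, hq]
  rw [h1, h2, ← jacobiSym.quadratic_reciprocity_if hDo hq]
  by_cases h3 : D % 4 = 3 <;> by_cases h4 : q % 4 = 3 <;> simp [h3, h4]

end chars

section comb

/-- Extension by one. -/
def extOne (S : Finset ℕ) (p : ℕ) : (S → ℤˣ) →* ℤˣ where
  toFun h := if hp : p ∈ S then h ⟨p, hp⟩ else 1
  map_one' := by split_ifs <;> rfl
  map_mul' a b := by split_ifs <;> simp

/-- The linear condition for a vector of characters. -/
def ell (S : Finset ℕ) (D : ℕ) : (S → ℤˣ) →* ℤˣ :=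
  (∏ p ∈ D.primeFactors, extOne S p) * (if D % 4 = 3 then extOne S 2 else 1)

lemma exists_indep (S : Finset ℕ) (hS : 5 ≤ S.card) (D₁ D₂ : ℕ) (v : S → ℤˣ) :
    ∃ h₁ h₂ : S → ℤˣ, ell S D₁ h₁ = 1 ∧ ell S D₂ h₁ = 1 ∧ ell S D₁ h₂ = 1 ∧ ell S D₂ h₂ = 1 ∧
      h₁ ≠ 1 ∧ h₁ ≠ v ∧ h₂ ≠ 1 ∧ h₂ ≠ v ∧ h₁ * h₂ ≠ 1 ∧ h₁ * h₂ ≠ v := by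
  classical
  let f : (S → ℤˣ) →* ℤˣ × ℤˣ := (ell S D₁).prod (ell S D₂)
  have hcard : Nat.card (S → ℤˣ) = 2 ^ S.card := by
    simp
  have h1 := Subgroup.card_mul_index f.ker
  rw [Subgroup.index_ker, hcard] at h1
  have h2 : Nat.card f.range ≤ 4 := by
    have := Subgroup.card_le_card_group f.range
    simpa using this
  have h3 : 2 ^ 5 ≤ 2 ^ S.card := Nat.pow_le_pow_right (by norm_num) hS
  have h4 : 8 ≤ Nat.card f.ker := by nlinarith
  have hsq : ∀ x : S → ℤˣ, x * x = 1 := fun x => by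
    ext p; simp
  have pick : ∀ T : Finset (S → ℤˣ), T.card ≤ 4 → ∃ h, ell S D₁ h = 1 ∧ ell S D₂ h = 1 ∧ h ∉ T := by
    intro T hT
    by_contra! hcon
    have hsub : (f.ker : Set (S → ℤˣ)) ⊆ T := by
      intro h hh
      have : f h = 1 := hh
      simp only [f, MonoidHom.prod_apply, Prod.mk_eq_one] at this
      exact hcon h this.1 this.2
    have := Set.ncard_le_ncard hsub (Finset.finite_toSet T)
    rw [Set.ncard_coe_finset] at this
    have h5 : Nat.card f.ker = (f.ker : Set (S → ℤˣ)).ncard := rfl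
    omega
  obtain ⟨h₁, a1, a2, a3⟩ := pick {1, v} (Finset.card_le_two.trans (by norm_num))
  obtain ⟨h₂, b1, b2, b3⟩ := pick {1, v, h₁, h₁ * v} Finset.card_le_four
  simp only [Finset.mem_insert, Finset.mem_singleton, not_or] at a3 b3
  refine ⟨h₁, h₂, a1, a2, b1, b2, a3.1, a3.2, b3.1, b3.2.1, ?_, ?_⟩
  · intro h
    apply b3.2.2.1
    rw [← one_mul h₂, ← hsq h₁, mul_assoc, h, mul_one]
  · intro h
    apply b3.2.2.2
    rw [← h, ← mul_assoc, hsq, one_mul]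

end comb

section final

lemma exists_good_prime (S : Finset ℕ) (hSp : ∀ p ∈ S, p.Prime) (D₁ D₂ : ℕ)
    (hsf₁ : Squarefree D₁) (hsf₂ : Squarefree D₂) (ho₁ : D₁ % 2 = 1) (ho₂ : D₂ % 2 = 1)
    (hS₁ : D₁.primeFactors ⊆ S) (hS₂ : D₂.primeFactors ⊆ S)
    (h : S → ℤˣ) (e₁ : ell S D₁ h = 1) (e₂ : ell S D₂ h = 1) :
    ∃ q > 2 * D₁ * D₂, q.Prime ∧ (∀ p (hp : p ∈ S), chi p q = h ⟨p, hp⟩) ∧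
      IsSquare ((D₁ : ℤ) : ZMod q) ∧ IsSquare ((D₂ : ℤ) : ZMod q) := by
  have hpos₁ : 0 < D₁ := by omega
  have hpos₂ : 0 < D₂ := by omega
  obtain ⟨q, hqN, hq, hchi⟩ := exists_prime_chi (insert 2 S)
    (by intro p hp; rcases Finset.mem_insert.mp hp with rfl | hp
        · exact Nat.prime_two
        · exact hSp p hp) (fun p => extOne S p h) (2 * D₁ * D₂)
  have := Fact.mk hq
  have hq2 : q % 2 = 1 := by
    have h1 : 2 * D₁ * D₂ ≥ 2 := by nlinarith [Nat.mul_pos hpos₁ hpos₂]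
    have := hq.eq_two_or_odd
    omega
  have key : ∀ D : ℕ, Squarefree D → D % 2 = 1 → D.primeFactors ⊆ S → ell S D h = 1 → D < q →
      IsSquare ((D : ℤ) : ZMod q) := by
    intro D hsf ho hS he hlt
    have hr := recip q D hsf ho hq2
    have : jacobiSym D q = 1 := by
      rw [hr]
      have he' := congrArg (Units.val) he
      unfold ell at he'
      rw [MonoidHom.mul_apply, MonoidHom.finsetProd_apply] at he'
      rw [Finset.prod_congr rfl (fun p hp => hchi p (Finset.mem_insert_of_mem (hS hp))),
        hchi 2 (Finset.mem_insert_self _ _)]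
      push_cast at he'
      refine Eq.trans ?_ he'
      congr 1
      split_ifs <;> rfl
    rw [← jacobiSym.legendreSym.to_jacobiSym] at this
    refine (legendreSym.eq_one_iff q ?_).mp this
    push_cast
    rw [Ne, ZMod.natCast_eq_zero_iff]
    intro hd
    have := Nat.le_of_dvd (by omega) hd
    omega
  refine ⟨q, hqN, hq, ?_, key D₁ hsf₁ ho₁ hS₁ e₁ (by nlinarith), key D₂ hsf₂ ho₂ hS₂ e₂ (by nlinarith)⟩
  intro p hp
  rw [hchi p (Finset.mem_insert_of_mem hp)]
  simp [extOne, hp]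

lemma chi_eq_one_odd (p : ℕ) (hp : p.Prime) (h2 : p ≠ 2) (m : ℤ) (hm : ¬ (p : ℤ) ∣ m)
    (hsq : IsSquare (m : ZMod p)) : chi p m = 1 := by
  have := Fact.mk hp
  rw [chi, if_neg h2, ← jacobiSym.legendreSym.to_jacobiSym]
  refine (legendreSym.eq_one_iff p ?_).mpr hsq
  rwa [Ne, ZMod.intCast_zmod_eq_zero_iff_dvd]

lemma biquad_aux {K : Type*} [Field K] [NumberField K] (D₁ D₂ : ℕ) (s₁ s₂ : K)
    (hs₁ : s₁ ^ 2 = ((D₁ : ℤ) : K)) (hs₂ : s₂ ^ 2 = ((D₂ : ℤ) : K))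
    (hgen : IntermediateField.adjoin ℚ {s₁, s₂} = ⊤)
    (hsf₁ : Squarefree D₁) (hsf₂ : Squarefree D₂) (ho₁ : D₁ % 2 = 1) (ho₂ : D₂ % 2 = 1)
    (h1 : D₁ ≠ 1) (h2 : D₂ ≠ 1) (hnsq : ¬ IsSquare ((D₁ : ℤ) * (D₂ : ℤ)))
    (hdeg : Module.finrank ℚ K = 4) (hcyc : IsCyclic (ClassGroup (𝓞 K))) :
    (discr K).natAbs.primeFactors.card ≤ 4 := by
  classical
  have hpos₁ : 0 < D₁ := by omega
  have hpos₂ : 0 < D₂ := by omega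
  have nsq : ∀ D : ℕ, Squarefree D → D ≠ 1 → ¬ IsSquare (D : ℤ) := by
    rintro D hsf hD h
    rw [Int.isSquare_natCast_iff] at h
    obtain ⟨a, rfl⟩ := h
    have := hsf a dvd_rfl
    rw [Nat.isUnit_iff] at this
    simp [this] at hD
  have n₁ := nsq D₁ hsf₁ h1
  have n₂ := nsq D₂ hsf₂ h2
  have sf₁ : Squarefree (D₁ : ℤ) := Int.squarefree_natCast.mpr hsf₁
  have sf₂ : Squarefree (D₂ : ℤ) := Int.squarefree_natCast.mpr hsf₂
  set S : Finset ℕ := D₁.primeFactors ∪ D₂.primeFactors ∪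
    (if D₁ % 4 = 3 ∨ D₂ % 4 = 3 then {2} else ∅) with hSdef
  have hS₁ : D₁.primeFactors ⊆ S := by
    intro p hp; rw [hSdef, Finset.mem_union, Finset.mem_union]; exact Or.inl (Or.inl hp)
  have hS₂ : D₂.primeFactors ⊆ S := by
    intro p hp; rw [hSdef, Finset.mem_union, Finset.mem_union]; exact Or.inl (Or.inr hp)
  have hSmem : ∀ p ∈ S, (p.Prime ∧ p ∣ D₁) ∨ (p.Prime ∧ p ∣ D₂) ∨
      (p = 2 ∧ (D₁ % 4 = 3 ∨ D₂ % 4 = 3)) := by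
    intro p hp
    rw [hSdef, Finset.mem_union, Finset.mem_union] at hp
    rcases hp with (hp | hp) | hp
    · exact Or.inl ⟨Nat.prime_of_mem_primeFactors hp, Nat.dvd_of_mem_primeFactors hp⟩
    · exact Or.inr (Or.inl ⟨Nat.prime_of_mem_primeFactors hp, Nat.dvd_of_mem_primeFactors hp⟩)
    · split_ifs at hp with h
      · exact Or.inr (Or.inr ⟨Finset.mem_singleton.mp hp, h⟩)
      · simp at hp
  have hSp : ∀ p ∈ S, p.Prime := by
    intro p hp
    rcases hSmem p hp with h | h | h
    · exact h.1
    · exact h.1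
    · rw [h.1]; exact Nat.prime_two
  have hsub : (discr K).natAbs.primeFactors ⊆ S := by
    intro p hp
    have hpp := Nat.prime_of_mem_primeFactors hp
    have hpd : (p : ℤ) ∣ discr K := Int.natCast_dvd.mpr (Nat.dvd_of_mem_primeFactors hp)
    rcases prime_dvd_discr D₁ D₂ s₁ s₂ hs₁ hs₂ n₁ n₂ hnsq hdeg p hpp hpd with h | h | h
    · have : D₁ % 4 = 3 ∨ D₂ % 4 = 3 := by
        by_contra hcon
        refine two_not_dvd_discr D₁ D₂ s₁ s₂ hs₁ hs₂ n₁ n₂ hnsq hdeg (by omega) (by omega) ?_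
        rw [h] at hpd
        exact hpd
      rw [hSdef, Finset.mem_union, if_pos this]
      right; simp [h]
    · exact hS₁ (Nat.mem_primeFactors.mpr ⟨hpp, by exact_mod_cast h, hpos₁.ne'⟩)
    · exact hS₂ (Nat.mem_primeFactors.mpr ⟨hpp, by exact_mod_cast h, hpos₂.ne'⟩)
  refine (Finset.card_le_card hsub).trans ?_
  by_contra hcon
  have h5 : 5 ≤ S.card := by omega
  -- the vector of the values at -1
  have hv : ∀ p : S, ∃ u : ℤˣ, chi p (-1) = u := by
    intro p
    have hm := chi_mul p (-1) (-1)
    have h1 : chi p 1 = 1 := by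
      unfold chi; split_ifs <;> simp
    rw [neg_one_mul, neg_neg, h1] at hm
    exact ⟨⟨chi p (-1), chi p (-1), hm.symm, hm.symm⟩, rfl⟩
  choose v hv using hv
  obtain ⟨a, b, a1, a2, b1, b2, na, nav, nb, nbv, nab, nabv⟩ := exists_indep S h5 D₁ D₂ v
  obtain ⟨q, hqN, hq, hqchi, hq1, hq2⟩ :=
    exists_good_prime S hSp D₁ D₂ hsf₁ hsf₂ ho₁ ho₂ hS₁ hS₂ a a1 a2
  obtain ⟨r, hrN, hr, hrchi, hr1, hr2⟩ :=
    exists_good_prime S hSp D₁ D₂ hsf₁ hsf₂ ho₁ ho₂ hS₁ hS₂ b b1 b2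
  have hb1 : D₁ ≤ 2 * D₁ * D₂ := by nlinarith
  have hb2 : D₂ ≤ 2 * D₁ * D₂ := by nlinarith
  have hb3 : 2 ≤ 2 * D₁ * D₂ := by nlinarith [Nat.mul_pos hpos₁ hpos₂]
  have ndvd : ∀ (q D : ℕ), 0 < D → D < q → ¬ (q : ℤ) ∣ (D : ℤ) := by
    intro q D h0 hlt h
    have := Nat.le_of_dvd h0 (by exact_mod_cast h)
    omega
  obtain ⟨I, hI⟩ := exists_split D₁ D₂ s₁ s₂ hs₁ hs₂ hgen q hq (by omega)
    (ndvd q D₁ hpos₁ (by omega)) (ndvd q D₂ hpos₂ (by omega)) hq1 hq2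
  obtain ⟨J, hJ⟩ := exists_split D₁ D₂ s₁ s₂ hs₁ hs₂ hgen r hr (by omega)
    (ndvd r D₁ hpos₁ (by omega)) (ndvd r D₂ hpos₂ (by omega)) hr1 hr2
  obtain ⟨m, hm, ε, X, c, hε, hX, hc⟩ := cyclic_norm hcyc I J q r hI hJ hq.ne_zero hr.ne_zero
  -- primes of S do not divide m
  have hSlt : ∀ p ∈ S, p ≤ 2 * D₁ * D₂ := by
    intro p hp
    rcases hSmem p hp with h | h | h
    · exact (Nat.le_of_dvd hpos₁ h.2).trans hb1
    · exact (Nat.le_of_dvd hpos₂ h.2).trans hb2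
    · omega
  have hlt : ∀ p : ℕ, p.Prime → p ≤ 2 * D₁ * D₂ → ¬ (p : ℤ) ∣ ε * (m : ℤ) := by
    intro p hp hle h
    have hpm : p ∣ m := by
      rcases hε with rfl | rfl
      · rw [one_mul] at h; exact_mod_cast h
      · rw [neg_one_mul, dvd_neg] at h; exact_mod_cast h
    have hq' : ¬ p ∣ q := fun h => by
      have := (Nat.prime_dvd_prime_iff_eq hp hq).mp h; omega
    have hr' : ¬ p ∣ r := fun h => by
      have := (Nat.prime_dvd_prime_iff_eq hp hr).mp h; omega
    rcases hm with rfl | rfl | rfl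
    · exact hq' hpm
    · exact hr' hpm
    · rcases hp.dvd_mul.mp hpm with h | h
      · exact hq' h
      · exact hr' h
  have hodd : (ε * (m : ℤ)) % 2 = 1 := by
    have := hlt 2 Nat.prime_two hb3
    push_cast at this
    omega
  obtain ⟨u₁, w₁, hf₁⟩ := norm_form (D₁ : ℤ) s₁ hs₁ n₁ c
  obtain ⟨u₂, w₂, hf₂⟩ := norm_form (D₂ : ℤ) s₂ hs₂ n₂ c
  rw [← hc] at hf₁ hf₂
  have hchi : ∀ p ∈ S, chi p (ε * (m : ℤ)) = 1 := by
    intro p hp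
    have hnd := hlt p (hSp p hp) (hSlt p hp)
    rcases hSmem p hp with h | h | h
    · exact chi_eq_one_odd p h.1 (by rintro rfl; omega) _ hnd
        (isSquare_mod p h.1 D₁ _ sf₁ (by exact_mod_cast h.2) X u₁ w₁ hX hf₁)
    · exact chi_eq_one_odd p h.1 (by rintro rfl; omega) _ hnd
        (isSquare_mod p h.1 D₂ _ sf₂ (by exact_mod_cast h.2) X u₂ w₂ hX hf₂)
    · have h4 : (ε * (m : ℤ)) % 4 = 1 := by
        rcases h.2 with h | h
        · exact mod_four D₁ _ (by omega) hodd X u₁ w₁ hX hf₁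
        · exact mod_four D₂ _ (by omega) hodd X u₂ w₂ hX hf₂
      rw [chi, if_pos h.1, ZMod.χ₄_int_eq_if_mod_four, h4, hodd]
      simp
  have fin : ∀ g : S → ℤˣ, (∀ p (hp : p ∈ S), chi p m = g ⟨p, hp⟩) → g ≠ 1 → g ≠ v → False := by
    intro g hg g1 gv
    rcases hε with rfl | rfl
    · apply g1
      ext ⟨p, hp⟩
      rw [← hg p hp]
      have := hchi p hp
      rw [one_mul] at this
      rw [this]; rfl
    · apply gv
      ext ⟨p, hp⟩
      rw [← hg p hp]
      have := hchi p hp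
      rw [chi_mul, hv ⟨p, hp⟩, hg p hp] at this
      rw [hg p hp]
      have h6 : v ⟨p, hp⟩ * g ⟨p, hp⟩ = 1 := Units.ext (by push_cast; exact this)
      have h7 : g ⟨p, hp⟩ = v ⟨p, hp⟩ := by
        rw [← one_mul (g _), ← Int.units_mul_self (v ⟨p, hp⟩), mul_assoc, h6, mul_one]
      rw [h7]
  rcases hm with rfl | rfl | rfl
  · exact fin a hqchi na nav
  · exact fin b hrchi nb nbv
  · refine fin (a * b) (fun p hp => ?_) nab nabv
    push_cast
    rw [chi_mul, hqchi p hp, hrchi p hp]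
    simp

end final

theorem stmt6 (d₁ d₂ : ℤ) (hsf₁ : Squarefree d₁) (hsf₂ : Squarefree d₂)
    (hodd₁ : Odd d₁) (hodd₂ : Odd d₂) (hpos₁ : 0 < d₁) (hpos₂ : 0 < d₂)
    (hne : d₁ ≠ d₂) (h1 : d₁ ≠ 1) (h2 : d₂ ≠ 1) (hnsq : ¬ IsSquare (d₁ * d₂))
    [NumberField (biquad d₁ d₂)]
    (hdeg : Module.finrank ℚ (biquad d₁ d₂) = 4)
    (hcyc : IsCyclic (ClassGroup (𝓞 (biquad d₁ d₂)))) :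
    (NumberField.discr (biquad d₁ d₂)).natAbs.primeFactors.card ≤ 4 := by
  obtain ⟨t₁, ht₁⟩ := IsAlgClosed.exists_pow_nat_eq (d₁ : ℂ) (n := 2) (by norm_num)
  obtain ⟨t₂, ht₂⟩ := IsAlgClosed.exists_pow_nat_eq (d₂ : ℂ) (n := 2) (by norm_num)
  have hset : biquad d₁ d₂ = IntermediateField.adjoin ℚ {t₁, t₂} := by
    unfold biquad
    apply le_antisymm
    · rw [IntermediateField.adjoin_le_iff]
      have m1 : t₁ ∈ IntermediateField.adjoin ℚ {t₁, t₂} :=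
        IntermediateField.subset_adjoin _ _ (by simp)
      have m2 : t₂ ∈ IntermediateField.adjoin ℚ {t₁, t₂} :=
        IntermediateField.subset_adjoin _ _ (by simp)
      rintro x (hx | hx)
      · rw [← ht₁] at hx
        rcases sq_eq_sq_iff_eq_or_eq_neg.mp hx with rfl | rfl
        · exact m1
        · exact neg_mem m1
      · rw [← ht₂] at hx
        rcases sq_eq_sq_iff_eq_or_eq_neg.mp hx with rfl | rfl
        · exact m2
        · exact neg_mem m2
    · apply IntermediateField.adjoin.mono
      rintro x (rfl | rfl)
      · exact Or.inl ht₁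
      · exact Or.inr ht₂
  have m1 : t₁ ∈ biquad d₁ d₂ := by
    rw [hset]; exact IntermediateField.subset_adjoin _ _ (by simp)
  have m2 : t₂ ∈ biquad d₁ d₂ := by
    rw [hset]; exact IntermediateField.subset_adjoin _ _ (by simp)
  have hgen : IntermediateField.adjoin ℚ {(⟨t₁, m1⟩ : biquad d₁ d₂), ⟨t₂, m2⟩} = ⊤ := by
    have key : @IntermediateField.adjoin ℚ _ (biquad d₁ d₂) _ (biquad d₁ d₂).algebra'
        {(⟨t₁, m1⟩ : biquad d₁ d₂), ⟨t₂, m2⟩} = ⊤ := by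
      apply IntermediateField.lift_injective
      rw [IntermediateField.lift_adjoin, IntermediateField.lift_top, Set.image_pair]
      exact hset.symm
    have halg : (DivisionRing.toRatAlgebra : Algebra ℚ (biquad d₁ d₂)) =
        (biquad d₁ d₂).algebra' := Subsingleton.elim _ _
    rw [halg]
    exact key
  obtain ⟨D₁, rfl⟩ := Int.eq_ofNat_of_zero_le hpos₁.le
  obtain ⟨D₂, rfl⟩ := Int.eq_ofNat_of_zero_le hpos₂.le
  refine biquad_aux D₁ D₂ (⟨t₁, m1⟩ : biquad D₁ D₂) ⟨t₂, m2⟩ ?_ ?_ hgen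
    (Int.squarefree_natCast.mp hsf₁) (Int.squarefree_natCast.mp hsf₂) ?_ ?_ ?_ ?_ hnsq hdeg hcyc
  · apply Subtype.ext; simpa using ht₁
  · apply Subtype.ext; simpa using ht₂
  · obtain ⟨k, hk⟩ := hodd₁; omega
  · obtain ⟨k, hk⟩ := hodd₂; omega
  · rintro rfl; simp at h1
  · rintro rfl; simp at h2
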